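/- For every positive integer n, M_e(n) - M_o(n) ≡ 0 (mod 3) if n is not a perfect square, M_e(n) - M_o(n) ≡ 1 (mod 3) if n is an odd perfect square, and M_e(n) - M_o(n) ≡ 2 (mod 3) if n is an even perfect square. -/

import Mathlib

/-!
Weight each partition by `(-1)` to the number of its missing integers. If the largest part is `m`
and there are `d` distinct parts, then `m - d` integers are missing, so the weight is `(-1)^(m+d)`.
Partitions with all parts at most `m`, weighted by `(-1)^d`, have generating function
`H_m = ∏_{i ≤ m} (1 - 2 q^i) / (1 - q^i)`, which is `∏_{i ≤ m} (1 + q^i) / (1 - q^i)` modulo 3.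
Hence, modulo 3, `M_e(n) - M_o(n)` is the coefficient of `q^n` in
`∑_{m ≥ 1} (-1)^m (H_m - H_{m-1}) = ∑_{m ≥ 1} (-1)^{m-1} q^m (-q; q)_{m-1} / (q; q)_m`.

This series equals `∑_{k ≥ 1} (-1)^{k-1} q^{k²}`, a case of the Rogers–Fine identity. Put
`S_k = ∑_n (-q^k)^n (-q^k; q)_n / (q^k; q)_{n+1}`, so that the series is `q S_1`. The terms of
`S_k + q^{2k+1} S_{k+1}` telescope (`qSum_telescope`), giving `S_k = 1 - q^{2k+1} S_{k+1}`; iterating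
this yields `q S_1 = q - q^4 + q^9 - ⋯`. To avoid convergence questions, the sums are truncated
after `N` terms and the identities are read modulo `q^N`.
-/

/-- The number of missing integers of a partition: positive integers less than
the largest part which do not occur as a part. -/
def missingCount {n : ℕ} (π : n.Partition) : ℕ :=
  ((Finset.Ico 1 π.parts.sup).filter (fun j => j ∉ π.parts)).card

/-- The number of partitions of `n` with an even number of missing integers. -/
def Me (n : ℕ) : ℕ := Fintype.card {π : n.Partition // Even (missingCount π)}

/-- The number of partitions of `n` with an odd number of missing integers. -/
def Mo (n : ℕ) : ℕ := Fintype.card {π : n.Partition // Odd (missingCount π)}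

open PowerSeries in
/-- `∏_{i < n} (1 + q^{k+i}) / (1 - q^{k+i})`. -/
noncomputable def qRatio (k n : ℕ) : (ZMod 3)⟦X⟧ :=
  ∏ i ∈ Finset.range n, (1 + X ^ (k + i)) * (1 - X ^ (k + i))⁻¹

open PowerSeries in
/-- The partial sum `∑_{n < N} (-q^k)^n (-q^k; q)_n / (q^k; q)_{n+1}`. -/
noncomputable def qSum (k N : ℕ) : (ZMod 3)⟦X⟧ :=
  ∑ n ∈ Finset.range N, (-1) ^ n * X ^ (k * n) * qRatio k n * (1 - X ^ (k + n))⁻¹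

open PowerSeries in
lemma one_sub_mul_inv {m : ℕ} (hm : 0 < m) :
    (1 - X ^ m : (ZMod 3)⟦X⟧) * (1 - X ^ m)⁻¹ = 1 := by
  apply PowerSeries.mul_inv_cancel
  simp [hm.ne']

open PowerSeries in
lemma qRatio_succ (k n : ℕ) :
    qRatio k (n + 1) = qRatio k n * ((1 + X ^ (k + n)) * (1 - X ^ (k + n))⁻¹) := by
  simp [qRatio, Finset.prod_range_succ]

open PowerSeries in
/-- The first factor of the product is dropped by shifting the base point. -/
lemma qRatio_shift {k : ℕ} (hk : 0 < k) (n : ℕ) :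
    (1 + X ^ k) * qRatio (k + 1) n =
      (1 - X ^ k) * (qRatio k n * ((1 + X ^ (k + n)) * (1 - X ^ (k + n))⁻¹)) := by
  rw [← qRatio_succ, qRatio, qRatio, Finset.prod_range_succ']
  have h := one_sub_mul_inv hk
  have e : ∀ i, k + 1 + i = k + (i + 1) := fun i => by ring
  simp only [e, add_zero]
  linear_combination (-(1 + X ^ k) *
    ∏ i ∈ Finset.range n, (1 + X ^ (k + (i + 1))) * (1 - X ^ (k + (i + 1)))⁻¹) * h

open PowerSeries in
/-- The `N`-term form of the Rogers–Fine step `S_k + q^{2k+1} S_{k+1} = 1`, multiplied by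
`1 + q^k`. The right-hand side is `1 + q^k` minus a telescoping remainder. -/
lemma qSum_telescope {k : ℕ} (hk : 0 < k) (N : ℕ) :
    (1 + X ^ k) * (qSum k N + X ^ (2 * k + 1) * qSum (k + 1) N) =
      (1 + X ^ k) - (-1) ^ N * X ^ (k * N) * qRatio k N *
        (X ^ k + (1 - X ^ k) * (1 - X ^ (k + N))⁻¹) := by
  induction N with
  | zero =>
    have h := one_sub_mul_inv hk
    simp only [qSum, qRatio, Finset.range_zero, Finset.sum_empty, Finset.prod_empty,
      mul_zero, pow_zero, add_zero, mul_one]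
    linear_combination h
  | succ N ih =>
    have e1 : qSum k (N + 1) = qSum k N +
        (-1) ^ N * X ^ (k * N) * qRatio k N * (1 - X ^ (k + N))⁻¹ := by
      simp [qSum, Finset.sum_range_succ]
    have e2 : qSum (k + 1) (N + 1) = qSum (k + 1) N +
        (-1) ^ N * X ^ ((k + 1) * N) * qRatio (k + 1) N * (1 - X ^ (k + (N + 1)))⁻¹ := by
      simp [qSum, Finset.sum_range_succ, show k + 1 + N = k + (N + 1) by ring]
    have hs := qRatio_shift hk N
    have ha := one_sub_mul_inv (show 0 < k + N by omega)
    have hb := one_sub_mul_inv (show 0 < k + (N + 1) by omega)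
    rw [e1, e2, qRatio_succ]
    generalize (1 - X ^ (k + N) : (ZMod 3)⟦X⟧)⁻¹ = a at *
    generalize (1 - X ^ (k + (N + 1)) : (ZMod 3)⟦X⟧)⁻¹ = b at *
    generalize qRatio k N = P at *
    generalize qRatio (k + 1) N = P' at *
    generalize qSum k N = S at *
    generalize qSum (k + 1) N = S' at *
    have x1 : (X : (ZMod 3)⟦X⟧) ^ (k + N) = X ^ k * X ^ N := by ring
    have x2 : (X : (ZMod 3)⟦X⟧) ^ (k + (N + 1)) = X ^ k * X * X ^ N := by ring
    have x3 : (X : (ZMod 3)⟦X⟧) ^ (2 * k + 1) = X ^ k * X ^ k * X := by ring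
    have x4 : (X : (ZMod 3)⟦X⟧) ^ ((k + 1) * N) = X ^ (k * N) * X ^ N := by ring
    have x5 : (X : (ZMod 3)⟦X⟧) ^ (k * (N + 1)) = X ^ (k * N) * X ^ k := by ring
    have x6 : (-1 : (ZMod 3)⟦X⟧) ^ (N + 1) = - (-1) ^ N := by ring
    rw [x1] at hs ha
    rw [x2] at hb
    rw [x3] at ih
    rw [x1, x3, x4, x5, x6]
    generalize (X : (ZMod 3)⟦X⟧) ^ (k * N) = w at *
    generalize (X : (ZMod 3)⟦X⟧) ^ k = x at *
    generalize (X : (ZMod 3)⟦X⟧) ^ N = y at *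
    generalize (-1 : (ZMod 3)⟦X⟧) ^ N = s at *
    generalize (X : (ZMod 3)⟦X⟧) = q at *
    -- The increment in `N` of the claim, with `P'` expressed through `P` by `hs`, divided by
    -- `s * w * P`.
    have key : (1 + x) * a + x * x * q * y * b * (1 - x) * (1 + x * y) * a
        - x * (1 + x * y) * a * (x + (1 - x) * b) = x + (1 - x) * a := by
      linear_combination (-x * (1 - x) * (1 + x * y) * a) * hb + x * ha
    linear_combination ih + (s * w * P) * key + (x * x * q * s * w * y * b) * hs

open PowerSeries in
/-- `S_k + q^{2k+1} S_{k+1} = 1` modulo `q^N`: the telescoping remainder is divisible by `q^{kN}`. -/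
lemma qSum_step {k : ℕ} (hk : 0 < k) (N : ℕ) :
    (X : (ZMod 3)⟦X⟧) ^ N ∣ qSum k N + X ^ (2 * k + 1) * qSum (k + 1) N - 1 := by
  have hu : IsUnit (1 + X ^ k : (ZMod 3)⟦X⟧) := by
    rw [PowerSeries.isUnit_iff_constantCoeff]
    simp [hk.ne']
  rw [← hu.dvd_mul_left]
  have h := qSum_telescope hk N
  have : (1 + X ^ k : (ZMod 3)⟦X⟧) * (qSum k N + X ^ (2 * k + 1) * qSum (k + 1) N - 1) =
      X ^ (k * N) * (-((-1) ^ N * qRatio k N *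
        (X ^ k + (1 - X ^ k) * (1 - X ^ (k + N))⁻¹))) := by
    linear_combination h
  rw [this]
  exact Dvd.dvd.mul_right (pow_dvd_pow _ (Nat.le_mul_of_pos_left N hk)) _

open PowerSeries in
/-- `K` applications of `qSum_step`; the exponents add up to `3 + 5 + ⋯ + (2K+1) = K² + 2K`. -/
lemma qSum_iterate (N K : ℕ) :
    (X : (ZMod 3)⟦X⟧) ^ N ∣ qSum 1 N - ∑ k ∈ Finset.range K, (-1) ^ k * X ^ (k ^ 2 + 2 * k)
      - (-1) ^ K * X ^ (K ^ 2 + 2 * K) * qSum (K + 1) N := by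
  induction K with
  | zero => simp
  | succ K ih =>
    have h := (qSum_step (Nat.succ_pos K) N).mul_left ((-1) ^ K * X ^ (K ^ 2 + 2 * K))
    convert dvd_add ih h using 1
    rw [Finset.sum_range_succ]
    simp only [Nat.succ_eq_add_one]
    ring

open PowerSeries in
/-- The coefficient of `q^n` in `q S_1`; terms of `S_1` beyond the first `n` do not affect it. -/
lemma coeff_X_mul_qSum (n : ℕ) :
    coeff n (X * qSum 1 n) =
      ∑ k ∈ Finset.range n, if n = (k + 1) ^ 2 then (-1 : ZMod 3) ^ k else 0 := by
  have h1 : (X : (ZMod 3)⟦X⟧) ^ n ∣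
      qSum 1 n - ∑ k ∈ Finset.range n, (-1) ^ k * X ^ (k ^ 2 + 2 * k) := by
    have h := qSum_iterate n n
    have h2 : (X : (ZMod 3)⟦X⟧) ^ n ∣ (-1) ^ n * X ^ (n ^ 2 + 2 * n) * qSum (n + 1) n :=
      ((pow_dvd_pow _ (by nlinarith)).mul_left _).mul_right _
    simpa using dvd_add h h2
  have h3 : (X : (ZMod 3)⟦X⟧) ^ (n + 1) ∣
      X * qSum 1 n - ∑ k ∈ Finset.range n, (-1) ^ k * X ^ ((k + 1) ^ 2) := by
    convert mul_dvd_mul_left X h1 using 1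
    · ring
    · rw [mul_sub, Finset.mul_sum]
      congr 1
      exact Finset.sum_congr rfl fun k _ => by ring
  have h4 := X_pow_dvd_iff.1 h3 n (Nat.lt_succ_self n)
  rw [map_sub, sub_eq_zero] at h4
  rw [h4, map_sum]
  refine Finset.sum_congr rfl fun k _ => ?_
  have : ((-1) ^ k : (ZMod 3)⟦X⟧) = C ((-1) ^ k) := by simp
  rw [this, coeff_C_mul, coeff_X_pow]
  simp

/-- The character whose product over the distinct parts of a partition is `(-1)^d` (`d` the number
of distinct parts) if all parts are at most `m`, and `0` otherwise. -/
def signChar (m i _c : ℕ) : ZMod 3 := if i ≤ m then -1 else 0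

open PowerSeries in
lemma three_eq_zero : (3 : (ZMod 3)⟦X⟧) = 0 := by
  rw [← map_ofNat C 3, show (OfNat.ofNat 3 : ZMod 3) = 0 from rfl, map_zero]

open PowerSeries in
open scoped PowerSeries.WithPiTopology in
/-- Modulo 3 the factor of a part `i ≤ m` is
`1 - q^i / (1 - q^i) = (1 - 2 q^i) / (1 - q^i) = (1 + q^i) / (1 - q^i)`. -/
lemma genFun_signChar (m : ℕ) : Nat.Partition.genFun (signChar m) = qRatio 1 m := by
  let _ : TopologicalSpace (ZMod 3) := ⊥
  have : DiscreteTopology (ZMod 3) := ⟨rfl⟩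
  have h := Nat.Partition.hasProd_genFun (signChar m)
  refine h.unique ?_
  have h0 : ∀ i ∉ Finset.range m,
      (1 + ∑' j, signChar m (i + 1) (j + 1) • X ^ ((i + 1) * (j + 1)) : (ZMod 3)⟦X⟧) = 1 := by
    intro i hi
    have : ¬ i + 1 ≤ m := by simpa using hi
    simp [signChar, this]
  have hfin := hasProd_prod_of_ne_finset_one (L := .unconditional ℕ) h0
  suffices hE : qRatio 1 m = ∏ i ∈ Finset.range m,
      (1 + ∑' j, signChar m (i + 1) (j + 1) • X ^ ((i + 1) * (j + 1)) : (ZMod 3)⟦X⟧) by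
    rw [hE]
    exact hfin
  rw [qRatio]
  refine Finset.prod_congr rfl fun i hi => ?_
  have hi' : i + 1 ≤ m := by simpa using hi
  have e : (fun j ↦ signChar m (i + 1) (j + 1) • (X : (ZMod 3)⟦X⟧) ^ ((i + 1) * (j + 1))) =
      fun j ↦ - ((X ^ (i + 1)) * (X ^ (i + 1)) ^ j) := by
    funext j
    simp only [signChar, hi', if_true, neg_smul, one_smul]
    ring
  have h0 : constantCoeff ((X : (ZMod 3)⟦X⟧) ^ (i + 1)) = 0 := by simp
  have h1 := WithPiTopology.one_sub_mul_tsum_pow_of_constantCoeff_eq_zero h0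
  have h2 := (WithPiTopology.summable_pow_of_constantCoeff_eq_zero h0).tsum_mul_left (X ^ (i + 1))
  rw [e, tsum_neg, h2, add_comm 1 i, eq_comm, PowerSeries.eq_mul_inv_iff_mul_eq (by simp)]
  linear_combination (-X ^ (i + 1)) * h1 - X ^ (i + 1) * three_eq_zero

lemma prod_signChar {n : ℕ} (π : n.Partition) (m : ℕ) :
    π.parts.toFinsupp.prod (signChar m) =
      if π.parts.sup ≤ m then (-1) ^ π.parts.toFinset.card else 0 := by
  rw [Finsupp.prod, Multiset.toFinsupp_support]
  split_ifs with h
  · rw [Multiset.sup_le] at h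
    rw [← Finset.prod_const]
    refine Finset.prod_congr rfl fun i hi => ?_
    simp [signChar, h i (by simpa using hi)]
  · rw [Multiset.sup_le] at h
    push Not at h
    obtain ⟨i, hi, him⟩ := h
    exact Finset.prod_eq_zero (i := i) (by simpa using hi) (by simp [signChar, him])

lemma sup_mem_parts {n : ℕ} (hn : 0 < n) (π : n.Partition) : π.parts.sup ∈ π.parts := by
  have hne : π.parts.toFinset.Nonempty := by
    rw [Multiset.toFinset_nonempty]
    intro h
    have := π.parts_sum
    simp [h] at this
    omega
  obtain ⟨i, hi, h⟩ := Finset.exists_mem_eq_sup _ hne id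
  have h' : π.parts.sup = i := by simpa [Finset.sup_def] using h
  rw [h']
  simpa using hi

lemma missingCount_add_card {n : ℕ} (hn : 0 < n) (π : n.Partition) :
    missingCount π + π.parts.toFinset.card = π.parts.sup := by
  have h1 : (Finset.Ico 1 π.parts.sup).filter (fun j => j ∉ π.parts) =
      Finset.Icc 1 π.parts.sup \ π.parts.toFinset := by
    ext j
    have := sup_mem_parts hn π
    simp only [Finset.mem_filter, Finset.mem_Ico, Finset.mem_sdiff, Finset.mem_Icc,
      Multiset.mem_toFinset]
    constructor
    · rintro ⟨⟨a, b⟩, c⟩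
      exact ⟨⟨a, b.le⟩, c⟩
    · rintro ⟨⟨a, b⟩, c⟩
      exact ⟨⟨a, lt_of_le_of_ne b (by rintro rfl; exact c this)⟩, c⟩
  rw [missingCount, h1, Finset.card_sdiff_add_card_eq_card]
  · simp
  · intro j hj
    rw [Multiset.mem_toFinset] at hj
    simp only [Finset.mem_Icc]
    exact ⟨π.parts_pos hj, Multiset.le_sup hj⟩

/-- Extraction of the largest part: only the term `j + 1 = π.parts.sup` survives. -/
lemma neg_one_pow_missingCount {n : ℕ} (hn : 0 < n) (π : n.Partition) :
    (-1 : ZMod 3) ^ missingCount π = ∑ j ∈ Finset.range n, (-1) ^ (j + 1) *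
      (π.parts.toFinsupp.prod (signChar (j + 1)) - π.parts.toFinsupp.prod (signChar j)) := by
  have hm := sup_mem_parts hn π
  have h1 := π.parts_pos hm
  have h2 := π.le_of_mem_parts hm
  have h3 := missingCount_add_card hn π
  simp only [prod_signChar]
  rw [Finset.sum_eq_single (π.parts.sup - 1)]
  · rw [Nat.sub_add_cancel h1, if_pos le_rfl, if_neg (by omega), sub_zero]
    rw [← h3, pow_add, mul_assoc, ← mul_pow]
    simp
  · intro j _ hj
    by_cases h : π.parts.sup ≤ j
    · rw [if_pos h, if_pos (by omega)]
      simp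
    · rw [if_neg h, if_neg (by omega)]
      simp
  · intro h
    exact absurd (Finset.mem_range.2 (by omega)) h

lemma Me_sub_Mo (n : ℕ) :
    (Me n : ℤ) - Mo n = ∑ π : n.Partition, (-1 : ℤ) ^ missingCount π := by
  rw [Me, Mo, Fintype.card_subtype, Fintype.card_subtype, Finset.card_filter, Finset.card_filter]
  push_cast
  rw [← Finset.sum_sub_distrib]
  refine Finset.sum_congr rfl fun π _ => ?_
  rcases Nat.even_or_odd (missingCount π) with h | h
  · simp [h, Nat.not_odd_iff_even.2 h]
  · simp [h, Nat.not_even_iff_odd.2 h]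

open PowerSeries in
/-- The right-hand side is the coefficient of `q^n` in `∑_{k ≥ 0} (-1)^k q^{(k+1)²}`. -/
lemma cast_Me_sub_Mo {n : ℕ} (hn : 0 < n) :
    (((Me n : ℤ) - Mo n : ℤ) : ZMod 3) =
      ∑ k ∈ Finset.range n, if n = (k + 1) ^ 2 then (-1 : ZMod 3) ^ k else 0 := by
  rw [Me_sub_Mo, ← coeff_X_mul_qSum]
  push_cast
  simp only [neg_one_pow_missingCount hn]
  rw [Finset.sum_comm]
  simp only [← Finset.mul_sum, Finset.sum_sub_distrib, ← Nat.Partition.coeff_genFun,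
    genFun_signChar, ← map_sub]
  rw [qSum, Finset.mul_sum, map_sum]
  refine Finset.sum_congr rfl fun j _ => ?_
  rw [← coeff_C_mul]
  congr 1
  rw [qRatio_succ]
  have h := one_sub_mul_inv (show 0 < 1 + j by omega)
  have hc : (C ((-1 : ZMod 3) ^ (j + 1)) : (ZMod 3)⟦X⟧) = - (-1) ^ j := by
    simp [pow_succ]
  have hx : (X : (ZMod 3)⟦X⟧) ^ (1 + j) = X * X ^ j := by ring
  rw [hc, one_mul]
  rw [hx] at h ⊢
  linear_combination (-(-1) ^ j * qRatio 1 j) * h +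
    (- (-1) ^ j * qRatio 1 j * (X * X ^ j) * (1 - X * X ^ j)⁻¹) * three_eq_zero

theorem statement5 (n : ℕ) (hn : 0 < n) :
    (¬ IsSquare n → ((Me n : ℤ) - (Mo n : ℤ)) % 3 = 0) ∧
    (IsSquare n → Odd n → ((Me n : ℤ) - (Mo n : ℤ)) % 3 = 1) ∧
    (IsSquare n → Even n → ((Me n : ℤ) - (Mo n : ℤ)) % 3 = 2) := by
  have key := cast_Me_sub_Mo hn
  have hsq : ∀ r, n = (r + 1) ^ 2 →
      (((Me n : ℤ) - Mo n : ℤ) : ZMod 3) = (-1) ^ r := by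
    intro r hr
    rw [key, Finset.sum_eq_single r, if_pos hr]
    · intro k _ hk
      refine if_neg fun h => hk ?_
      have := Nat.pow_left_injective (n := 2) (by norm_num) (h.symm.trans hr)
      simpa using this
    · intro h
      exact absurd (Finset.mem_range.2 (by nlinarith)) h
  have hroot : IsSquare n → ∃ r, n = (r + 1) ^ 2 := by
    rintro ⟨s, hs⟩
    obtain ⟨r, rfl⟩ := Nat.exists_eq_succ_of_ne_zero (show s ≠ 0 by rintro rfl; omega)
    exact ⟨r, by rw [hs, Nat.succ_eq_add_one]; ring⟩
  refine ⟨fun h => ?_, fun h ho => ?_, fun h he => ?_⟩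
  · rw [Finset.sum_eq_zero] at key
    · exact Int.emod_eq_zero_of_dvd ((ZMod.intCast_zmod_eq_zero_iff_dvd _ 3).1 key)
    · intro k _
      exact if_neg fun hk => h ⟨k + 1, by rw [hk]; ring⟩
  · obtain ⟨r, hr⟩ := hroot h
    have hr' : Even r := by
      rw [hr, Nat.odd_pow_iff (by norm_num)] at ho
      exact by simpa [parity_simps] using ho
    have h1 := hsq r hr
    rw [hr'.neg_one_pow] at h1
    exact (ZMod.intCast_eq_intCast_iff _ 1 3).1 (by exact_mod_cast h1)
  · obtain ⟨r, hr⟩ := hroot h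
    have hr' : Odd r := by
      rw [hr, Nat.even_pow' (by norm_num)] at he
      exact by simpa [parity_simps] using he
    have h1 := hsq r hr
    rw [hr'.neg_one_pow, show (-1 : ZMod 3) = 2 from rfl] at h1
    exact (ZMod.intCast_eq_intCast_iff _ 2 3).1 (by exact_mod_cast h1)
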